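/- For every even ℓ ≥ 4, all indices 1 ≤ i < j ≤ ℓ with ⌈i/2⌉ ≠ ⌈j/2⌉, and every vertex y of the graph G_ℓ, the closed neighborhood N[y] of y intersects the vertex set of the great cycle determined by P_i and P_j in at most 3 vertices. -/

import Mathlib

/-- Base relation for the theta graph `G'_ℓ`: the vertex `Sum.inl 0` is `v₁`, `Sum.inl 1` is `v₂`,
and `Sum.inr (i, k)` is the internal path vertex `x_{i+1, k+1}` (0-indexed encoding of the
1-indexed `x_{i,k}`, `1 ≤ i ≤ ℓ`, `1 ≤ k ≤ 6`). -/
def thetaRel (ℓ : ℕ) : Fin 2 ⊕ Fin ℓ × Fin 6 → Fin 2 ⊕ Fin ℓ × Fin 6 → Prop := fun a b =>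
  (∃ i : Fin ℓ, a = Sum.inl 0 ∧ b = Sum.inr (i, 0)) ∨
  (∃ (i : Fin ℓ) (k k' : Fin 6), (k : ℕ) + 1 = (k' : ℕ) ∧
      a = Sum.inr (i, k) ∧ b = Sum.inr (i, k')) ∨
  (∃ i : Fin ℓ, a = Sum.inr (i, 5) ∧ b = Sum.inl 1)

/-- The theta graph `G'_ℓ`: `v₁` and `v₂` joined by `ℓ` internally disjoint paths of length 7. -/
def thetaGraph (ℓ : ℕ) : SimpleGraph (Fin 2 ⊕ Fin ℓ × Fin 6) :=
  SimpleGraph.fromRel (thetaRel ℓ)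

/-- The graph `G_ℓ` (for even `ℓ`): obtained from the theta graph `G'_ℓ` by adding the matching
edges `x_{2i-1,1}x_{2i,1}` and `x_{2i-1,6}x_{2i,6}`; in the 0-indexed encoding these join
`Sum.inr (i, 0)` with `Sum.inr (j, 0)` and `Sum.inr (i, 5)` with `Sum.inr (j, 5)` whenever
`i ≠ j` and `⌊i/2⌋ = ⌊j/2⌋`. -/
def pairedThetaGraph (ℓ : ℕ) : SimpleGraph (Fin 2 ⊕ Fin ℓ × Fin 6) :=
  SimpleGraph.fromRel (fun a b => thetaRel ℓ a b ∨
    (∃ i j : Fin ℓ, (i : ℕ) / 2 = (j : ℕ) / 2 ∧ i ≠ j ∧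
      ((a = Sum.inr (i, 0) ∧ b = Sum.inr (j, 0)) ∨
        (a = Sum.inr (i, 5) ∧ b = Sum.inr (j, 5)))))

/-- The vertex set `{v₁, v₂} ∪ {x_{i,k}, x_{j,k} : 1 ≤ k ≤ 6}` of the great cycle determined by
the paths `P_i` and `P_j`. -/
def greatCycleSet (ℓ : ℕ) (i j : Fin ℓ) : Set (Fin 2 ⊕ Fin ℓ × Fin 6) :=
  {Sum.inl 0, Sum.inl 1} ∪ {x | ∃ k : Fin 6, x = Sum.inr (i, k) ∨ x = Sum.inr (j, k)}

/-- For every even `ℓ ≥ 4`, indices `i < j` in different matched pairs, and every vertex `y`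
of `G_ℓ`, the closed neighborhood `N[y]` meets the vertex set of the great cycle determined by
`P_i` and `P_j` in at most `3` vertices. -/
theorem stmt_11 (ℓ : ℕ) (heven : Even ℓ) (hℓ : 4 ≤ ℓ) (i j : Fin ℓ) (hij : i < j)
    (hpair : (i : ℕ) / 2 ≠ (j : ℕ) / 2) (y : Fin 2 ⊕ Fin ℓ × Fin 6) :
    ((insert y ((pairedThetaGraph ℓ).neighborSet y)) ∩ greatCycleSet ℓ i j).ncard ≤ 3 := by
  suffices h : ∃ a b c, ((insert y ((pairedThetaGraph ℓ).neighborSet y)) ∩ greatCycleSet ℓ i j)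
      ⊆ {a, b, c} by
    obtain ⟨a, b, c, h⟩ := h
    refine (Set.ncard_le_ncard h (Set.toFinite _)).trans ?_
    refine (Set.ncard_insert_le _ _).trans ?_
    have := Set.ncard_insert_le b {c}
    rw [Set.ncard_singleton] at this
    omega
  have hne : i ≠ j := ne_of_lt hij
  have key : ∀ x, x ∈ ((insert y ((pairedThetaGraph ℓ).neighborSet y)) ∩ greatCycleSet ℓ i j) →
      (x = y ∨ (pairedThetaGraph ℓ).Adj y x) ∧
      (x = Sum.inl 0 ∨ x = Sum.inl 1 ∨ ∃ k : Fin 6, x = Sum.inr (i, k) ∨ x = Sum.inr (j, k)) := by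
    rintro x ⟨h1, h2⟩
    refine ⟨h1, ?_⟩
    rcases h2 with (h | h) | h
    · exact Or.inl h
    · exact Or.inr (Or.inl h)
    · exact Or.inr (Or.inr h)
  simp only [pairedThetaGraph, SimpleGraph.fromRel_adj, thetaRel] at key
  rcases y with v | ⟨m, k⟩
  · refine ⟨Sum.inl v, Sum.inr (i, if v = 0 then 0 else 5), Sum.inr (j, if v = 0 then 0 else 5), ?_⟩
    intro x hx
    have := key x hx
    simp only [Set.mem_insert_iff, Set.mem_singleton_iff]
    clear key hx
    fin_cases v <;> simp at this ⊢ <;> grind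
  · by_cases hm : m = i ∨ m = j
    · refine ⟨Sum.inr (m, k), if k = 0 then Sum.inl 0 else Sum.inr (m, k - 1),
        if k = 5 then Sum.inl 1 else Sum.inr (m, k + 1), ?_⟩
      intro x hx
      have := key x hx
      simp only [Set.mem_insert_iff, Set.mem_singleton_iff]
      clear key hx
      obtain ⟨h, rfl | rfl | ⟨q, rfl | rfl⟩⟩ := this
      · fin_cases k <;> simp at h ⊢
      · fin_cases k <;> simp at h ⊢
      · fin_cases k <;> fin_cases q <;> simp at h ⊢ <;> grind
      · fin_cases k <;> fin_cases q <;> simp at h ⊢ <;> grind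
    · refine ⟨Sum.inl 0, Sum.inl 1,
        Sum.inr (if (m : ℕ) / 2 = (i : ℕ) / 2 then i else j, k), ?_⟩
      intro x hx
      have := key x hx
      simp only [Set.mem_insert_iff, Set.mem_singleton_iff]
      clear key hx
      obtain ⟨h, rfl | rfl | ⟨q, rfl | rfl⟩⟩ := this
      · simp
      · simp
      · simp only [reduceCtorEq, false_or, Sum.inr.injEq, Prod.mk.injEq] at h ⊢
        grind
      · simp only [reduceCtorEq, false_or, Sum.inr.injEq, Prod.mk.injEq] at h ⊢
        grind
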